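/- Let n ≥ 3 and let < be a linear order on the set of objects O. The designator rule D : D_<^n → M is obviously strategy-proof: there exist an extensive game form Γ and, for each agent i, a plan S_i mapping each single-peaked preference P_i to a strategy, such that S_i(P_i) obviously dominates every strategy of agent i at P_i, and for every profile P ∈ D_<^n the play of the planned strategies in Γ produces the allocation D(P). -/

import Mathlib

/-!
The designator is obviously strategy-proof because it can be computed by asking yes/no questions
about single preferences, each of which is obviously safe to answer truthfully.

For a general rule `f`, a box is a product of sets of preferences still considered possible. If
every box on which `f` is not constant admits a question to some agent which splits it and for
which, whatever the others' preferences in the box, a truthful answer followed by `f` is weakly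
better than the other answer followed by `f` at another preference (`Separates`), then asking these
questions until `f` is constant is an extensive game form implementing `f` (`osp_of_separates`).

For the designator, the questions are those of the algorithm. In Stage I an agent is asked whether
she is null; in Stage II the remaining agents are asked, from the lowest held object upwards,
whether they leave, with which object, and whom they designate. An agent who leaves takes her best
remaining object, so leaving truthfully is optimal. For passing and for Stage I the point is that
every remaining agent finally receives an object weakly preferred to the one she holds
(`run_res_weakPref`), whereas by leaving at once a passing agent could only get objects weakly below
the one she holds, which single-peakedness makes weakly worse.

The guarantee is clear as long as held objects move towards the peak, which crawling ensures. The
delicate case is an agent who inherits an object beyond her best remaining object `b`. She passed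
before, and so did everybody below the leaving agent; hence until she is asked again, all agents
leaving before her take the object they hold themselves, strictly below `b`. Nobody moves meanwhile
and `b` is still there when her turn comes (`Pending`, `run_res_pending`).
-/

/-- A preference is a strict linear order on the objects `Fin n`, encoded by its
rank function: `p o < p o'` means object `o` is strictly preferred to `o'`. -/
abbrev Pref (n : ℕ) := Fin n ≃ Fin n

/-- `o` is strictly preferred to `o'` under `p`. -/
def prefers {n : ℕ} (p : Pref n) (o o' : Fin n) : Prop := p o < p o'

/-- `o` is weakly preferred to `o'` under `p` (i.e. `o P o'` or `o = o'`). -/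
def weakPref {n : ℕ} (p : Pref n) (o o' : Fin n) : Prop := p o ≤ p o'

/-- The top-ranked object `r_1(p)`. -/
def topObj {n : ℕ} [NeZero n] (p : Pref n) : Fin n := p.symm 0

/-- The second-ranked object `r_2(p)`. -/
def secondObj {n : ℕ} [NeZero n] (p : Pref n) : Fin n := p.symm 1

/-- The `p`-best object of a (nonempty) finite set `S`: `max^p S`. -/
noncomputable def best {n : ℕ} [NeZero n] (p : Pref n) (S : Finset (Fin n)) : Fin n :=
  (S.toList.argmin (fun o => p o)).getD 0

/-- A profile belongs to the domain `D` coordinatewise. -/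
def inD {n : ℕ} (D : Set (Pref n)) (P : Fin n → Pref n) : Prop := ∀ i, P i ∈ D

/-- Individual rationality of an allocation at a profile: each agent `i` weakly
prefers her assigned object to her endowment `o_i = i`. -/
def IRAt {n : ℕ} (P : Fin n → Pref n) (m : Fin n → Fin n) : Prop :=
  ∀ i, weakPref (P i) (m i) i

/-- `m'` Pareto dominates `m` at profile `P`. -/
def ParetoDom {n : ℕ} (P : Fin n → Pref n) (m' m : Fin n → Fin n) : Prop :=
  (∀ i, weakPref (P i) (m' i) (m i)) ∧ ∃ j, prefers (P j) (m' j) (m j)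

/-- Pareto efficiency of an allocation at a profile. -/
def EffAt {n : ℕ} (P : Fin n → Pref n) (m : Fin n → Fin n) : Prop :=
  ¬ ∃ m' : Fin n → Fin n, Function.Bijective m' ∧ ParetoDom P m' m

/-- A rule maps profiles from the domain to allocations (bijections `N → O`). -/
def IsRule {n : ℕ} (D : Set (Pref n)) (f : (Fin n → Pref n) → (Fin n → Fin n)) : Prop :=
  ∀ P, inD D P → Function.Bijective (f P)

def Efficient {n : ℕ} (D : Set (Pref n)) (f : (Fin n → Pref n) → (Fin n → Fin n)) : Prop :=
  ∀ P, inD D P → EffAt P (f P)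

def IndRational {n : ℕ} (D : Set (Pref n)) (f : (Fin n → Pref n) → (Fin n → Fin n)) : Prop :=
  ∀ P, inD D P → IRAt P (f P)

def StrategyProof {n : ℕ} (D : Set (Pref n)) (f : (Fin n → Pref n) → (Fin n → Fin n)) : Prop :=
  ∀ P, inD D P → ∀ i, ∀ p' ∈ D, weakPref (P i) (f P i) (f (Function.update P i p') i)

/-- The active agents at profile `P` (those whose top object differs from their
endowment); since `o_i = i`, the set of active objects coincides with it. -/
def activeAgents {n : ℕ} [NeZero n] (P : Fin n → Pref n) : Finset (Fin n) :=
  Finset.univ.filter (fun i => topObj (P i) ≠ i)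

/-- Agent `i` is the acclaimed agent at profile `P`. -/
def acclaimed {n : ℕ} [NeZero n] (P : Fin n → Pref n) (i : Fin n) : Prop :=
  2 < (activeAgents P).card ∧ i ∈ activeAgents P ∧
    best (P i) (activeAgents P) ≠ i ∧
    ∀ j ∈ activeAgents P, j ≠ i → best (P j) (activeAgents P) = i

/-- Equity under unanimous acclaim. -/
def EquityUA {n : ℕ} [NeZero n] (D : Set (Pref n))
    (f : (Fin n → Pref n) → (Fin n → Fin n)) : Prop :=
  ∀ P, inD D P → ∀ i, acclaimed P i → f P i = best (P i) (activeAgents P)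

/-- Agents `i` and `j` form the acclaimed pair at profile `P`. -/
def acclaimedPair {n : ℕ} [NeZero n] (P : Fin n → Pref n) (i j : Fin n) : Prop :=
  ∃ Ni Nj : Finset (Fin n),
    Disjoint Ni Nj ∧ Ni ∪ Nj = activeAgents P ∧ Ni.card = Nj.card ∧ 1 < Ni.card ∧
    i ∈ Nj ∧ j ∈ Ni ∧
    (∀ l ∈ Ni, best (P l) (activeAgents P) = i) ∧
    (∀ l ∈ Nj, best (P l) (activeAgents P) = j)

/-- Equity under bipartite acclaim. -/
def EquityBA {n : ℕ} [NeZero n] (D : Set (Pref n))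
    (f : (Fin n → Pref n) → (Fin n → Fin n)) : Prop :=
  ∀ P, inD D P → ∀ i j, acclaimedPair P i j → f P i = j ∨ f P j = i

/-- Equity⁺ under bipartite acclaim. -/
def EquityPlusBA {n : ℕ} [NeZero n] (D : Set (Pref n))
    (f : (Fin n → Pref n) → (Fin n → Fin n)) : Prop :=
  ∀ P, inD D P → ∀ i j, acclaimedPair P i j → f P i = j ∧ f P j = i

/-- Single-peakedness of `p` w.r.t. the linear order on objects encoded by the
position permutation `σ` (`o < o'` iff `σ o < σ o'`). -/
def singlePeaked {n : ℕ} [NeZero n] (σ : Fin n ≃ Fin n) (p : Pref n) : Prop :=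
  ∀ o o' : Fin n,
    ((σ o' < σ o ∧ σ o < σ (topObj p)) ∨ (σ (topObj p) < σ o ∧ σ o < σ o')) →
    prefers p o o'

/-- The full single-peaked domain `D_<`. -/
def spDomain {n : ℕ} [NeZero n] (σ : Fin n ≃ Fin n) : Set (Pref n) :=
  {p | singlePeaked σ p}

/-- `D` is a single-peaked domain. -/
def IsSPDomain {n : ℕ} [NeZero n] (D : Set (Pref n)) : Prop :=
  ∃ σ : Fin n ≃ Fin n, D ⊆ spDomain σ

/-- Objects `o` and `o'` are connected in `D`: `o ∼ o'`. -/
def connectedObj {n : ℕ} [NeZero n] (D : Set (Pref n)) (o o' : Fin n) : Prop :=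
  ∃ p ∈ D, ∃ p' ∈ D, topObj p = o ∧ secondObj p = o' ∧ topObj p' = o' ∧ secondObj p' = o

/-- `D` is path-connected. -/
def pathConnected {n : ℕ} [NeZero n] (D : Set (Pref n)) : Prop :=
  ∀ o o' : Fin n, o ≠ o' → ∃ l : List (Fin n),
    l.Nodup ∧ l.head? = some o ∧ l.getLast? = some o' ∧ l.Chain' (connectedObj D)

/-- `p` and `p'` rank all objects in exactly opposite orders. -/
def reversedPair {n : ℕ} (p p' : Pref n) : Prop :=
  ∀ o o', prefers p o o' ↔ prefers p' o' o

/-- A rich domain: path-connected and containing two completely reversed preferences. -/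
def richDomain {n : ℕ} [NeZero n] (D : Set (Pref n)) : Prop :=
  pathConnected D ∧ ∃ p ∈ D, ∃ p' ∈ D, reversedPair p p'

/-- The restriction `→(x,y,z) ∈ R(D)`: whenever `x` is the best of `{x,y,z}`,
`y` is ranked above `z`. -/
def RestrR {n : ℕ} [NeZero n] (D : Set (Pref n)) (x y z : Fin n) : Prop :=
  ∀ p ∈ D, best p {x, y, z} = x → prefers p y z

/-- The ternary relation `(x,y,z) ∈ B(D)`. -/
def RelB {n : ℕ} [NeZero n] (D : Set (Pref n)) (x y z : Fin n) : Prop :=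
  RestrR D x y z ∧ RestrR D z y x

/-! ### Extensive game forms and obvious strategy-proofness -/

/-- An extensive game form: a finite rooted tree of histories (lists of actions,
prefix-closed), a player function and an outcome function on terminal histories. -/
structure GameForm (n : ℕ) where
  hist : Finset (List ℕ)
  root_mem : [] ∈ hist
  prefix_closed : ∀ h a, h ++ [a] ∈ hist → h ∈ hist
  player : List ℕ → Fin n
  outcome : List ℕ → (Fin n → Fin n)

/-- A strategy chooses an action at every history. -/
abbrev Strategy : Type := List ℕ → ℕ

/-- Terminal histories of the game form. -/
def GameForm.Terminal {n : ℕ} (Γ : GameForm n) (h : List ℕ) : Prop :=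
  h ∈ Γ.hist ∧ ∀ a, h ++ [a] ∉ Γ.hist

/-- A strategy of agent `i` is valid if it always chooses a feasible action. -/
def GameForm.ValidStrat {n : ℕ} (Γ : GameForm n) (i : Fin n) (s : Strategy) : Prop :=
  ∀ h ∈ Γ.hist, ¬ Γ.Terminal h → Γ.player h = i → h ++ [s h] ∈ Γ.hist

/-- Play from `h` under the strategy profile `s` reaches history `h'`. -/
inductive GameForm.Reaches {n : ℕ} (Γ : GameForm n) (s : Fin n → Strategy) :
    List ℕ → List ℕ → Prop
  | refl (h : List ℕ) : GameForm.Reaches Γ s h h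
  | step {h h' : List ℕ} : GameForm.Reaches Γ s h h' → h' ∈ Γ.hist → ¬ Γ.Terminal h' →
      GameForm.Reaches Γ s h (h' ++ [s (Γ.player h') h'])

/-- `o` belongs to the feasible set `X_i(h, s_i)` of agent `i` at history `h`
given her strategy `si`. -/
def GameForm.Feas {n : ℕ} (Γ : GameForm n) (i : Fin n) (h : List ℕ) (si : Strategy)
    (o : Fin n) : Prop :=
  ∃ s : Fin n → Strategy, (∀ j, Γ.ValidStrat j (s j)) ∧ s i = si ∧
    ∃ t, Γ.Reaches s h t ∧ Γ.Terminal t ∧ Γ.outcome t i = o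

/-- `h` is a decision node of `i` reachable (on-path) when `i` plays `si`. -/
def GameForm.ReachableNode {n : ℕ} (Γ : GameForm n) (i : Fin n) (si : Strategy)
    (h : List ℕ) : Prop :=
  h ∈ Γ.hist ∧ ¬ Γ.Terminal h ∧ Γ.player h = i ∧
    ∃ s : Fin n → Strategy, (∀ j, Γ.ValidStrat j (s j)) ∧ s i = si ∧ Γ.Reaches s [] h

/-- `si` obviously dominates `si'` at preference `p`: at every earliest point of
departure, the worst feasible outcome under `si` is weakly preferred to the best
feasible outcome under `si'`. -/
def GameForm.ObvDom {n : ℕ} (Γ : GameForm n) (i : Fin n) (p : Pref n)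
    (si si' : Strategy) : Prop :=
  ∀ h, Γ.ReachableNode i si h → Γ.ReachableNode i si' h → si h ≠ si' h →
    ∀ o o', Γ.Feas i h si o → Γ.Feas i h si' o' → weakPref p o o'

/-- Obvious strategy-proofness of a rule `f` on domain `D`. -/
def OSP {n : ℕ} (D : Set (Pref n)) (f : (Fin n → Pref n) → (Fin n → Fin n)) : Prop :=
  ∃ (Γ : GameForm n) (S : Fin n → Pref n → Strategy),
    (∀ i p, p ∈ D → Γ.ValidStrat i (S i p)) ∧
    (∀ i p, p ∈ D → ∀ s', Γ.ValidStrat i s' → Γ.ObvDom i p (S i p) s') ∧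
    (∀ P : Fin n → Pref n, inD D P →
      ∃ t, Γ.Reaches (fun j => S j (P j)) [] t ∧ Γ.Terminal t ∧ Γ.outcome t = f P)

/-! ### The crawler, the designator, and top trading cycles -/

/-- The running state of the crawler/designator algorithms: the sub-allocation of
objects currently held by remaining agents, and the final assignments so far. -/
structure AlgState (n : ℕ) where
  held : Fin n → Option (Fin n)
  res : Fin n → Option (Fin n)

/-- The object currently held by agent `i`. -/
def heldObj {n : ℕ} [NeZero n] (st : AlgState n) (i : Fin n) : Fin n := (st.held i).getD 0

/-- The remaining agents. -/
def remAgents {n : ℕ} (st : AlgState n) : Finset (Fin n) :=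
  Finset.univ.filter (fun i => (st.held i).isSome)

/-- The remaining objects. -/
def remObjs {n : ℕ} [NeZero n] (st : AlgState n) : Finset (Fin n) :=
  (remAgents st).image (heldObj st)

/-- The object of `S` adjacently larger than `o` w.r.t. the order `σ`. -/
noncomputable def adjLarger {n : ℕ} (σ : Fin n ≃ Fin n) (S : Finset (Fin n)) (o : Fin n) : Fin n :=
  ((S.filter (fun o' => σ o < σ o')).toList.argmin (fun o' => σ o')).getD o

/-- The agent `i^s` leaving at the current step: the remaining agent holding the
`σ`-smallest object among those whose best remaining object is weakly below their
held object. -/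
noncomputable def leaver {n : ℕ} [NeZero n] (σ : Fin n ≃ Fin n) (P : Fin n → Pref n)
    (st : AlgState n) : Option (Fin n) :=
  ((remAgents st).filter
      (fun i => σ (best (P i) (remObjs st)) ≤ σ (heldObj st i))).toList.argmin
    (fun i => σ (heldObj st i))

/-- One step of the crawler: the leaving agent takes her best remaining object,
and every remaining agent holding an object weakly above the taken object and
strictly below the leaver's object crawls to the adjacently larger object. -/
noncomputable def crawlerStep {n : ℕ} [NeZero n] (σ : Fin n ≃ Fin n) (P : Fin n → Pref n)
    (st : AlgState n) : AlgState n :=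
  match leaver σ P st with
  | none => st
  | some is =>
    let taken := best (P is) (remObjs st)
    { held := fun j =>
        if j = is then none
        else if (st.held j).isSome = true ∧ σ taken ≤ σ (heldObj st j) ∧
            σ (heldObj st j) < σ (heldObj st is) then
          some (adjLarger σ (remObjs st) (heldObj st j))
        else st.held j,
      res := Function.update st.res is (some taken) }

/-- Initially every agent holds her endowment `o_i = i`. -/
def crawlerInit (n : ℕ) : AlgState n := ⟨fun i => some i, fun _ => none⟩

/-- The crawler rule w.r.t. the object order `σ`. -/
noncomputable def crawler {n : ℕ} [NeZero n] (σ : Fin n ≃ Fin n) (P : Fin n → Pref n) :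
    Fin n → Fin n :=
  fun i => (((crawlerStep σ P)^[n] (crawlerInit n)).res i).getD 0

/-- `τ(i)`: the active agent whose endowment is `max^{P_i} O_{m̄⁰}`. -/
noncomputable def desTau {n : ℕ} [NeZero n] (P : Fin n → Pref n) (i : Fin n) : Fin n :=
  best (P i) (activeAgents P)

/-- Stage I of the designator: null agents receive their endowments and leave. -/
def desInit {n : ℕ} [NeZero n] (P : Fin n → Pref n) : AlgState n :=
  { held := fun i => if topObj (P i) = i then none else some i,
    res := fun i => if topObj (P i) = i then some i else none }

/-- One step of Stage II of the designator: the leaving agent `i^s` takes her best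
remaining object; if `τ(i^s)` is remaining and holds an object weakly above the
taken object and strictly below `i^s`'s held object, then `τ(i^s)` directly
inherits `i^s`'s object and only agents below `τ(i^s)` crawl (designating);
otherwise the crawling updating applies. -/
noncomputable def desStep {n : ℕ} [NeZero n] (σ : Fin n ≃ Fin n) (P : Fin n → Pref n)
    (st : AlgState n) : AlgState n :=
  match leaver σ P st with
  | none => st
  | some is =>
    let taken := best (P is) (remObjs st)
    let t := desTau P is
    if (st.held t).isSome = true ∧ σ taken ≤ σ (heldObj st t) ∧
        σ (heldObj st t) < σ (heldObj st is) then
      { held := fun j =>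
          if j = is then none
          else if j = t then some (heldObj st is)
          else if (st.held j).isSome = true ∧ σ taken ≤ σ (heldObj st j) ∧
              σ (heldObj st j) < σ (heldObj st t) then
            some (adjLarger σ (remObjs st) (heldObj st j))
          else st.held j,
        res := Function.update st.res is (some taken) }
    else
      { held := fun j =>
          if j = is then none
          else if (st.held j).isSome = true ∧ σ taken ≤ σ (heldObj st j) ∧
              σ (heldObj st j) < σ (heldObj st is) then
            some (adjLarger σ (remObjs st) (heldObj st j))
          else st.held j,
        res := Function.update st.res is (some taken) }

/-- The designator rule w.r.t. the object order `σ`. -/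
noncomputable def designator {n : ℕ} [NeZero n] (σ : Fin n ≃ Fin n) (P : Fin n → Pref n) :
    Fin n → Fin n :=
  fun i => (((desStep σ P)^[n] (desInit P)).res i).getD 0

/-- One round of top trading cycles: every remaining agent points to the owner of
her favorite remaining object (owner of object `o` is agent `o`), and every agent
lying on a pointing cycle receives the object she points to and leaves. -/
noncomputable def ttcStep {n : ℕ} [NeZero n] (P : Fin n → Pref n) (res : Fin n → Option (Fin n)) :
    Fin n → Option (Fin n) :=
  let rem : Finset (Fin n) := Finset.univ.filter (fun i => res i = none)
  let pt : Fin n → Fin n := fun i => best (P i) rem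
  fun i =>
    match res i with
    | some o => some o
    | none =>
      if (List.range (n + 1)).any (fun k => (k != 0) && (pt^[k] i == i)) then some (pt i)
      else none

/-- The top-trading-cycle rule. -/
noncomputable def ttc {n : ℕ} [NeZero n] (P : Fin n → Pref n) : Fin n → Fin n :=
  fun i => (((ttcStep P)^[n] (fun _ => none)) i).getD 0

/-! ### From separating questions to an extensive game form -/

/-- A box: for every agent, the finite set of preferences still considered possible. -/
abbrev Box (n : ℕ) := Fin n → Finset (Pref n)

/-- The profile `P` belongs to the product of the sets of the box `B`. -/
def InBox {n : ℕ} (B : Box n) (P : Fin n → Pref n) : Prop := ∀ i, P i ∈ B i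

/-- The rule `f` takes two different values on the box `B`. -/
def Undecided {n : ℕ} (f : (Fin n → Pref n) → (Fin n → Fin n)) (B : Box n) : Prop :=
  ∃ P P', InBox B P ∧ InBox B P' ∧ f P ≠ f P'

/-- Asking agent `i` whether her preference lies in `A` splits the box `B` nontrivially, and
answering this question truthfully is obviously optimal when the remaining play yields `f`. -/
structure Separates {n : ℕ} (f : (Fin n → Pref n) → (Fin n → Fin n)) (B : Box n) (i : Fin n)
    (A : Finset (Pref n)) : Prop where
  yes : ∃ p ∈ B i, p ∈ A
  no : ∃ p ∈ B i, p ∉ A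
  obv : ∀ P P', InBox B P → InBox B P' → (P i ∈ A ↔ P' i ∉ A) →
    weakPref (P i) (f P i) (f P' i)

/-- The box left after the question `Q B` has been answered on `B`; the answer `0` means yes,
every other answer means no. -/
def child {n : ℕ} (Q : Box n → Fin n × Finset (Pref n)) (B : Box n) (a : ℕ) : Box n :=
  Function.update B (Q B).1 (if a = 0 then B (Q B).1 ∩ (Q B).2 else B (Q B).1 \ (Q B).2)

/-- The box reached from `B` along the list of answers `h`. -/
def boxAt {n : ℕ} (Q : Box n → Fin n × Finset (Pref n)) (B : Box n) (h : List ℕ) : Box n :=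
  h.foldl (child Q) B

/-- Histories of the question game started at `B`: answers are `0` or `1`, and questions are
asked only while the rule is undecided. -/
def ValidHist {n : ℕ} (f : (Fin n → Pref n) → (Fin n → Fin n))
    (Q : Box n → Fin n × Finset (Pref n)) : Box n → List ℕ → Prop
  | _, [] => True
  | B, a :: l => Undecided f B ∧ a < 2 ∧ ValidHist f Q (child Q B a) l

/-- A box of nonempty sets of preferences from the domain. -/
def GoodBox {n : ℕ} (D : Set (Pref n)) (B : Box n) : Prop :=
  ∀ i, (B i).Nonempty ∧ ∀ p ∈ B i, p ∈ D

/-- The total size of a box, which strictly decreases along the question game. -/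
def boxMass {n : ℕ} (B : Box n) : ℕ := ∑ i, (B i).card

section Questions

variable {n : ℕ} {D : Set (Pref n)} {f : (Fin n → Pref n) → (Fin n → Fin n)}
  {Q : Box n → Fin n × Finset (Pref n)}

theorem boxAt_append (B : Box n) (h : List ℕ) (a : ℕ) :
    boxAt Q B (h ++ [a]) = child Q (boxAt Q B h) a := by
  simp [boxAt]

theorem child_subset (B : Box n) (a : ℕ) (i : Fin n) : child Q B a i ⊆ B i := by
  unfold child
  by_cases hi : i = (Q B).1
  · subst hi
    rw [Function.update_self]
    split_ifs
    · exact Finset.inter_subset_left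
    · exact Finset.sdiff_subset
  · rw [Function.update_of_ne hi]

theorem mem_child_self (B : Box n) (a : ℕ) (p : Pref n) :
    p ∈ child Q B a (Q B).1 ↔ p ∈ B (Q B).1 ∧ (a = 0 ↔ p ∈ (Q B).2) := by
  unfold child
  rw [Function.update_self]
  split_ifs with h <;> simp [h]

theorem goodBox_child (hQ : ∀ B, GoodBox D B → Undecided f B → Separates f B (Q B).1 (Q B).2)
    {B : Box n} (hB : GoodBox D B) (hU : Undecided f B) (a : ℕ) : GoodBox D (child Q B a) := by
  intro i
  refine ⟨?_, fun p hp => (hB i).2 p (child_subset B a i hp)⟩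
  by_cases hi : i = (Q B).1
  · subst hi
    obtain ⟨⟨p, hp, hpA⟩, ⟨q, hq, hqA⟩, _⟩ := hQ B hB hU
    by_cases ha : a = 0
    · exact ⟨p, (mem_child_self B a p).2 ⟨hp, by simp [ha, hpA]⟩⟩
    · exact ⟨q, (mem_child_self B a q).2 ⟨hq, by simp [ha, hqA]⟩⟩
  · unfold child
    rw [Function.update_of_ne hi]
    exact (hB i).1

theorem boxMass_child (hQ : ∀ B, GoodBox D B → Undecided f B → Separates f B (Q B).1 (Q B).2)
    {B : Box n} (hB : GoodBox D B) (hU : Undecided f B) (a : ℕ) :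
    boxMass (child Q B a) < boxMass B := by
  unfold boxMass
  refine Finset.sum_lt_sum (fun i _ => Finset.card_le_card (child_subset B a i))
    ⟨(Q B).1, Finset.mem_univ _, Finset.card_lt_card ?_⟩
  refine (Finset.ssubset_iff_of_subset (child_subset B a _)).2 ?_
  obtain ⟨⟨p, hp, hpA⟩, ⟨q, hq, hqA⟩, _⟩ := hQ B hB hU
  by_cases ha : a = 0
  · exact ⟨q, hq, by simp [mem_child_self, ha, hqA]⟩
  · exact ⟨p, hp, by simp [mem_child_self, ha, hpA]⟩

theorem validHist_append (B : Box n) (h : List ℕ) (a : ℕ) :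
    ValidHist f Q B (h ++ [a]) ↔
      ValidHist f Q B h ∧ Undecided f (boxAt Q B h) ∧ a < 2 := by
  induction h generalizing B with
  | nil => simp [ValidHist, boxAt]
  | cons b l ih =>
    simp only [List.cons_append, ValidHist, ih]
    simp only [boxAt, List.foldl_cons]
    tauto

theorem goodBox_boxAt (hQ : ∀ B, GoodBox D B → Undecided f B → Separates f B (Q B).1 (Q B).2)
    {B : Box n} (hB : GoodBox D B) {h : List ℕ} (hh : ValidHist f Q B h) :
    GoodBox D (boxAt Q B h) := by
  induction h generalizing B with
  | nil => exact hB
  | cons a l ih => exact ih (goodBox_child hQ hB hh.1 a) hh.2.2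

theorem finite_validHist
    (hQ : ∀ B, GoodBox D B → Undecided f B → Separates f B (Q B).1 (Q B).2)
    (m : ℕ) (B : Box n) (hB : GoodBox D B) (hm : boxMass B ≤ m) :
    {h | ValidHist f Q B h}.Finite := by
  induction m using Nat.strong_induction_on generalizing B with
  | _ m ih =>
    by_cases hU : Undecided f B
    · have key : ∀ a, {h | ValidHist f Q (child Q B a) h}.Finite := fun a =>
        ih _ (lt_of_lt_of_le (boxMass_child hQ hB hU a) hm) _ (goodBox_child hQ hB hU a) le_rfl
      refine (((key 0).image (List.cons 0)).union
        (((key 1).image (List.cons 1)).union (Set.finite_singleton []))).subset ?_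
      rintro (_ | ⟨a, l⟩) hl
      · right; right; rfl
      · obtain ⟨_, ha, hl⟩ := hl
        interval_cases a
        · left; exact ⟨l, hl, rfl⟩
        · right; left; exact ⟨l, hl, rfl⟩
    · refine (Set.finite_singleton []).subset ?_
      rintro (_ | ⟨a, l⟩) hl
      · rfl
      · exact absurd hl.1 hU

open Classical in
/-- The question game: at the box `B`, the agent `(Q B).1` is asked whether her preference lies
in `(Q B).2`; play stops once the rule is constant on the current box. -/
noncomputable def qGame (f : (Fin n → Pref n) → (Fin n → Fin n))
    (Q : Box n → Fin n × Finset (Pref n)) (B : Box n)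
    (hfin : {h | ValidHist f Q B h}.Finite) : GameForm n where
  hist := hfin.toFinset
  root_mem := by simp [ValidHist]
  prefix_closed h a := by
    simp only [Set.Finite.mem_toFinset, Set.mem_ofPred_eq, validHist_append]
    exact fun h => h.1
  player h := (Q (boxAt Q B h)).1
  outcome h := if hP : ∃ P, InBox (boxAt Q B h) P then f hP.choose else id

open Classical in
/-- The truthful plan in the question game. -/
noncomputable def truth (Q : Box n → Fin n × Finset (Pref n)) (B : Box n) (p : Pref n) :
    Strategy :=
  fun h => if p ∈ (Q (boxAt Q B h)).2 then 0 else 1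

variable {B : Box n} {hfin : {h | ValidHist f Q B h}.Finite}

theorem mem_qGame {h : List ℕ} : h ∈ (qGame f Q B hfin).hist ↔ ValidHist f Q B h := by
  simp [qGame]

theorem terminal_qGame {h : List ℕ} :
    (qGame f Q B hfin).Terminal h ↔ ValidHist f Q B h ∧ ¬ Undecided f (boxAt Q B h) := by
  unfold GameForm.Terminal
  simp only [mem_qGame, validHist_append]
  constructor
  · rintro ⟨h1, h2⟩
    exact ⟨h1, fun hU => h2 0 ⟨h1, hU, by norm_num⟩⟩
  · rintro ⟨h1, h2⟩
    exact ⟨h1, fun a h => h2 h.2.1⟩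

theorem outcome_qGame {h : List ℕ} (hT : (qGame f Q B hfin).Terminal h) {P : Fin n → Pref n}
    (hP : InBox (boxAt Q B h) P) : (qGame f Q B hfin).outcome h = f P := by
  have hex : ∃ P, InBox (boxAt Q B h) P := ⟨P, hP⟩
  have hU := (terminal_qGame.1 hT).2
  simp only [qGame, hex, dif_pos]
  by_contra hne
  exact hU ⟨_, P, hex.choose_spec, hP, hne⟩

theorem boxAt_step_subset (h : List ℕ) (a : ℕ) (i : Fin n) :
    boxAt Q B (h ++ [a]) i ⊆ boxAt Q B h i := by
  rw [boxAt_append]; exact child_subset _ _ _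

theorem reaches_subset {s : Fin n → Strategy} {h t : List ℕ}
    (hr : (qGame f Q B hfin).Reaches s h t) (i : Fin n) : boxAt Q B t i ⊆ boxAt Q B h i := by
  induction hr with
  | refl => exact subset_rfl
  | step _ _ _ ih => exact (boxAt_step_subset _ _ _).trans ih

/-- Play that leaves `h` stays inside the box selected by the action taken at `h`. -/
theorem reaches_first {s : Fin n → Strategy} {h t : List ℕ}
    (hr : (qGame f Q B hfin).Reaches s h t) :
    t = h ∨ ∀ i, boxAt Q B t i ⊆
      boxAt Q B (h ++ [s ((qGame f Q B hfin).player h) h]) i := by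
  induction hr with
  | refl => exact Or.inl rfl
  | step _ _ _ ih =>
    right
    intro i
    rcases ih with rfl | ih
    · exact subset_rfl
    · exact (boxAt_step_subset _ _ _).trans (ih i)

theorem mem_boxAt_truth {h : List ℕ} {p : Pref n} {i : Fin n} (hp : p ∈ boxAt Q B h i)
    (hi : (Q (boxAt Q B h)).1 = i) : p ∈ boxAt Q B (h ++ [truth Q B p h]) i := by
  subst hi
  rw [boxAt_append, mem_child_self]
  refine ⟨hp, ?_⟩
  unfold truth
  split_ifs with h1 <;> simp [h1]

theorem mem_boxAt_other {h : List ℕ} {p : Pref n} {i : Fin n} (hp : p ∈ boxAt Q B h i)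
    (hi : (Q (boxAt Q B h)).1 ≠ i) (a : ℕ) : p ∈ boxAt Q B (h ++ [a]) i := by
  rw [boxAt_append]
  unfold child
  rwa [Function.update_of_ne (Ne.symm hi)]

/-- An agent following the truthful plan never excludes her own preference. -/
theorem reaches_truth {s : Fin n → Strategy} {h t : List ℕ} {i : Fin n} {p : Pref n}
    (hs : s i = truth Q B p) (hr : (qGame f Q B hfin).Reaches s h t)
    (hp : p ∈ boxAt Q B h i) : p ∈ boxAt Q B t i := by
  induction hr with
  | refl => exact hp
  | @step h' _ _ _ ih =>
    by_cases hi : (Q (boxAt Q B h')).1 = i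
    · have : s ((qGame f Q B hfin).player h') = truth Q B p := by
        rw [← hs, ← hi]; rfl
      rw [this]
      exact mem_boxAt_truth ih hi
    · exact mem_boxAt_other ih hi _

/-- If the rule can be separated on every box on which it is undecided, then it is obviously
strategy-proof. Truthful answers keep the agent's own preference in the box, while a first
deviation moves play into the other half, so `Separates.obv` compares the two outcomes. -/
theorem osp_of_separates [NeZero n] (hD : D.Nonempty)
    (hsep : ∀ B : Box n, GoodBox D B → Undecided f B → ∃ i A, Separates f B i A) :
    OSP D f := by
  classical
  have : Nonempty (Fin n × Finset (Pref n)) := ⟨⟨0, ∅⟩⟩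
  choose! Q hQ using fun (B : Box n) (hB : GoodBox D B) (hU : Undecided f B) =>
    (show ∃ q : Fin n × Finset (Pref n), Separates f B q.1 q.2 from by
      obtain ⟨i, A, h⟩ := hsep B hB hU
      exact ⟨(i, A), h⟩)
  let B : Box n := fun _ => Finset.univ.filter (· ∈ D)
  have hB : GoodBox D B := fun i => by
    obtain ⟨p, hp⟩ := hD
    exact ⟨⟨p, by simp [B, hp]⟩, by simp [B]⟩
  have hfin := finite_validHist hQ _ B hB le_rfl
  have hvalid : ∀ i p, (qGame f Q B hfin).ValidStrat i (truth Q B p) := by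
    intro i p h hh hT _
    rw [mem_qGame] at hh
    rw [terminal_qGame] at hT
    rw [mem_qGame, validHist_append]
    refine ⟨hh, by tauto, ?_⟩
    unfold truth
    split_ifs <;> norm_num
  refine ⟨qGame f Q B hfin, fun _ p => truth Q B p, fun i p _ => hvalid i p, ?_, ?_⟩
  · rintro i p hpD s' hs' h ⟨hh, hT, hpl, s, -, hsi, hr⟩ - hne o o' ⟨u, -, hui, t, hut, htT, hto⟩
      ⟨v, -, hvi, t', hvt, htT', hto'⟩
    have hs'a := hs' h hh hT hpl
    rw [mem_qGame, validHist_append] at hs'a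
    have hp : p ∈ boxAt Q B h i := reaches_truth hsi hr (by simp [B, boxAt, hpD])
    have hpt : p ∈ boxAt Q B t i := reaches_truth hui hut hp
    have hgood := goodBox_boxAt hQ hB (mem_qGame.1 hh)
    have hgt := goodBox_boxAt hQ hB (terminal_qGame.1 htT).1
    have hgt' := goodBox_boxAt hQ hB (terminal_qGame.1 htT').1
    choose P0 hP0 using fun j => (hgt j).1
    choose P' hP' using fun j => (hgt' j).1
    have hP : InBox (boxAt Q B t) (Function.update P0 i p) := by
      intro j
      by_cases hj : j = i
      · subst hj; simpa using hpt
      · simpa [hj] using hP0 j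
    rw [← hto, ← hto', outcome_qGame htT hP, outcome_qGame htT' (P := P') hP']
    have hobv := (hQ _ hgood hs'a.2.1).obv (Function.update P0 i p) P'
      (fun j => reaches_subset hut j (hP j)) (fun j => reaches_subset hvt j (hP' j))
    have hi : (Q (boxAt Q B h)).1 = i := hpl
    rw [hi] at hobv
    simp only [Function.update_self] at hobv
    apply hobv
    have hne' : t' ≠ h := fun e => hT (e ▸ htT')
    have h1 := (reaches_first hvt).resolve_left hne' i (hP' i)
    rw [hpl, hvi, boxAt_append] at h1
    have h2 := ((mem_child_self (Q := Q) (boxAt Q B h) (s' h) (P' i)).1 (by rwa [hi])).2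
    rw [← h2]
    have h3 := hs'a.2.2
    simp only [truth] at hne
    split_ifs at hne with h4 <;> simp only [h4, true_iff, false_iff] <;> omega
  · intro P hP
    have key : ∀ m h, boxMass (boxAt Q B h) ≤ m → ValidHist f Q B h → InBox (boxAt Q B h) P →
        (qGame f Q B hfin).Reaches (fun j => truth Q B (P j)) [] h →
        ∃ t, (qGame f Q B hfin).Reaches (fun j => truth Q B (P j)) [] t ∧
          (qGame f Q B hfin).Terminal t ∧ (qGame f Q B hfin).outcome t = f P := by
      intro m
      induction m using Nat.strong_induction_on with
      | _ m ih =>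
        intro h hm hv hb hr
        by_cases hU : Undecided f (boxAt Q B h)
        · have hT : ¬ (qGame f Q B hfin).Terminal h := fun hT => (terminal_qGame.1 hT).2 hU
          have hr' := GameForm.Reaches.step hr (mem_qGame.2 hv) hT
          have hlt := boxMass_child hQ (goodBox_boxAt hQ hB hv) hU
            (truth Q B (P ((qGame f Q B hfin).player h)) h)
          rw [← boxAt_append] at hlt
          refine ih _ (lt_of_lt_of_le hlt hm) _ le_rfl
            (mem_qGame.1 (hvalid _ _ h (mem_qGame.2 hv) hT rfl)) (fun j => ?_) hr'
          exact reaches_truth (s := fun j => truth Q B (P j)) rfl hr' (by simp [B, boxAt, hP j])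
        · have hT : (qGame f Q B hfin).Terminal h := terminal_qGame.2 ⟨hv, hU⟩
          exact ⟨h, hr, hT, outcome_qGame hT hb⟩
    exact key _ [] le_rfl trivial (fun i => by simp [B, boxAt, hP i]) (.refl _)

end Questions

/-! ### Best objects and single-peakedness -/

theorem argmin_toList {α β : Type*} [LinearOrder β] (g : α → β) {S : Finset α}
    (hS : S.Nonempty) : ∃ m ∈ S, S.toList.argmin g = some m ∧ ∀ o ∈ S, g m ≤ g o := by
  cases h : S.toList.argmin g with
  | none =>
    rw [List.argmin_eq_none, Finset.toList_eq_nil] at h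
    exact absurd h hS.ne_empty
  | some m =>
    refine ⟨m, by simpa using List.argmin_mem h, rfl, fun o ho => ?_⟩
    exact List.le_of_mem_argmin (Finset.mem_toList.2 ho) h

theorem adjLarger_spec {n : ℕ} {σ : Fin n ≃ Fin n} {S : Finset (Fin n)} {x y : Fin n}
    (hy : y ∈ S) (hxy : σ x < σ y) :
    adjLarger σ S x ∈ S ∧ σ x < σ (adjLarger σ S x) ∧
      ∀ z ∈ S, σ x < σ z → σ (adjLarger σ S x) ≤ σ z := by
  obtain ⟨m, hm, he, hle⟩ := argmin_toList (fun o => σ o)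
    (S := S.filter (fun o' => σ x < σ o')) ⟨y, by simp [hy, hxy]⟩
  have : adjLarger σ S x = m := by simp [adjLarger, he]
  rw [this]
  rw [Finset.mem_filter] at hm
  exact ⟨hm.1, hm.2, fun z hz hxz => hle z (by simp [hz, hxz])⟩

section Best

variable {n : ℕ} [NeZero n] {σ : Fin n ≃ Fin n} {p : Pref n} {S : Finset (Fin n)}

theorem best_spec (p : Pref n) (hS : S.Nonempty) :
    best p S ∈ S ∧ ∀ o ∈ S, p (best p S) ≤ p o := by
  obtain ⟨m, hm, he, hle⟩ := argmin_toList (fun o => p o) hS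
  have : best p S = m := by simp [best, he]
  rw [this]
  exact ⟨hm, hle⟩

theorem best_eq {m : Fin n} (hm : m ∈ S) (h : ∀ o ∈ S, p m ≤ p o) : best p S = m := by
  obtain ⟨h1, h2⟩ := best_spec p ⟨m, hm⟩
  exact p.injective (le_antisymm (h2 m hm) (h _ h1))

theorem best_erase {c : Fin n} (hS : S.Nonempty) (hc : best p S ≠ c) :
    best p (S.erase c) = best p S := by
  obtain ⟨h1, h2⟩ := best_spec p hS
  exact best_eq (Finset.mem_erase.2 ⟨hc, h1⟩) fun o ho => h2 o (Finset.mem_of_mem_erase ho)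

/-- Within any set of objects, preference increases along the order up to the best object. -/
theorem sp_le (hp : singlePeaked σ p) {o o' : Fin n} (ho : o ∈ S) (ho' : o' ∈ S)
    (h1 : σ o' ≤ σ o) (h2 : σ o ≤ σ (best p S)) : p o ≤ p o' := by
  rcases h1.eq_or_lt with h1 | h1
  · rw [σ.injective h1]
  rcases lt_trichotomy (σ o) (σ (topObj p)) with h | h | h
  · exact (hp o o' (Or.inl ⟨h1, h⟩)).le
  · rw [σ.injective h]; simp [topObj]
  · rcases h2.eq_or_lt with h2 | h2
    · rw [σ.injective h2]; exact (best_spec p ⟨o, ho⟩).2 o' ho'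
    · exact absurd (hp o _ (Or.inr ⟨h, h2⟩)) (not_lt.2 ((best_spec p ⟨o, ho⟩).2 o ho))

/-- Removing an object cannot move the best object below a remaining object that was weakly
below the best one. -/
theorem le_best_erase (hp : singlePeaked σ p) {c x : Fin n} (hx : x ∈ S) (hxc : x ≠ c)
    (h : σ x ≤ σ (best p S)) : σ x ≤ σ (best p (S.erase c)) := by
  by_cases hc : best p S = c
  · by_contra! hlt
    have hx' : x ∈ S.erase c := Finset.mem_erase.2 ⟨hxc, hx⟩
    obtain ⟨h1, h2⟩ := best_spec p ⟨x, hx'⟩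
    have := sp_le hp hx (Finset.mem_of_mem_erase h1) hlt.le h
    have := p.injective (le_antisymm this (h2 x hx'))
    rw [← this] at hlt
    exact lt_irrefl _ hlt
  · rwa [best_erase ⟨x, hx⟩ hc]

end Best

/-! ### A single step of the designator -/

/-- No two remaining agents hold the same object. -/
def HeldInj {n : ℕ} [NeZero n] (st : AlgState n) : Prop :=
  ∀ i ∈ remAgents st, ∀ j ∈ remAgents st, heldObj st i = heldObj st j → i = j

theorem mem_remAgents {n : ℕ} {st : AlgState n} {j : Fin n} :
    j ∈ remAgents st ↔ (st.held j).isSome = true := by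
  simp [remAgents]

section Step

variable {n : ℕ} [NeZero n] {σ : Fin n ≃ Fin n} {P : Fin n → Pref n} {st : AlgState n}

theorem heldObj_mem {j : Fin n} (hj : j ∈ remAgents st) : heldObj st j ∈ remObjs st :=
  Finset.mem_image_of_mem _ hj

theorem mem_remObjs {o : Fin n} : o ∈ remObjs st ↔ ∃ j ∈ remAgents st, heldObj st j = o := by
  simp [remObjs]

theorem leaver_spec {i : Fin n} (h : leaver σ P st = some i) :
    i ∈ remAgents st ∧ σ (best (P i) (remObjs st)) ≤ σ (heldObj st i) ∧
      ∀ k ∈ remAgents st, σ (heldObj st k) < σ (heldObj st i) →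
        σ (heldObj st k) < σ (best (P k) (remObjs st)) := by
  have h1 := List.argmin_mem h
  simp only [Finset.mem_toList, Finset.mem_filter] at h1
  refine ⟨h1.1, h1.2, fun k hk hlt => ?_⟩
  by_contra! hle
  exact absurd (List.le_of_mem_argmin (by simp [hk, hle]) h) (not_le.2 hlt)

theorem exists_leaver {j : Fin n} (hj : j ∈ remAgents st) : ∃ i, leaver σ P st = some i := by
  obtain ⟨k, hk, hmax⟩ := Finset.exists_max_image (remAgents st) (fun i => σ (heldObj st i)) ⟨j, hj⟩
  obtain ⟨m, -, hm, -⟩ := argmin_toList (fun i => σ (heldObj st i))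
    (S := (remAgents st).filter
      (fun i => σ (best (P i) (remObjs st)) ≤ σ (heldObj st i))) ⟨k, by
        rw [Finset.mem_filter]
        refine ⟨hk, ?_⟩
        obtain ⟨l, hl, he⟩ := mem_remObjs.1 (best_spec (P k) ⟨_, heldObj_mem hk⟩).1
        rw [← he]
        exact hmax l hl⟩
  exact ⟨m, hm⟩

theorem leaver_eq (hI : HeldInj st) {i : Fin n} (hi : i ∈ remAgents st)
    (h1 : σ (best (P i) (remObjs st)) ≤ σ (heldObj st i))
    (h2 : ∀ k ∈ remAgents st, σ (heldObj st k) < σ (heldObj st i) →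
        σ (heldObj st k) < σ (best (P k) (remObjs st))) : leaver σ P st = some i := by
  obtain ⟨m, hm⟩ := exists_leaver (σ := σ) (P := P) hi
  obtain ⟨hm1, hm2, hm3⟩ := leaver_spec hm
  rcases lt_trichotomy (σ (heldObj st m)) (σ (heldObj st i)) with h | h | h
  · exact absurd (h2 m hm1 h) (not_lt.2 hm2)
  · rw [hm, hI m hm1 i hi (σ.injective h)]
  · exact absurd (hm3 i hi h) (not_lt.2 h1)

/-- The effect of one step with leaving agent `i`. Crawling is read as a designation too: the
holder `t` of the object just below the one of `i` inherits the latter, and everyone between the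
taken object and `t` crawls. Thus either `i` takes her own held object and nothing moves, or some
remaining `t` inherits from `i` and only agents below `t` crawl. -/
structure StepShape (σ : Fin n ≃ Fin n) (P : Fin n → Pref n) (st : AlgState n) (i : Fin n)
    (st' : AlgState n) : Prop where
  res : st'.res = Function.update st.res i (some (best (P i) (remObjs st)))
  rem : remAgents st' = (remAgents st).erase i
  shape : (best (P i) (remObjs st) = heldObj st i ∧
      ∀ j ∈ remAgents st, j ≠ i → heldObj st' j = heldObj st j) ∨
    ∃ t ∈ remAgents st, t ≠ i ∧ σ (best (P i) (remObjs st)) ≤ σ (heldObj st t) ∧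
      σ (heldObj st t) < σ (heldObj st i) ∧ heldObj st' t = heldObj st i ∧
      ∀ j ∈ remAgents st, j ≠ i → j ≠ t → heldObj st' j =
        if σ (best (P i) (remObjs st)) ≤ σ (heldObj st j) ∧ σ (heldObj st j) < σ (heldObj st t)
        then adjLarger σ (remObjs st) (heldObj st j) else heldObj st j

theorem desStep_shape (hI : HeldInj st) {i : Fin n} (hl : leaver σ P st = some i) :
    StepShape σ P st i (desStep σ P st) := by
  obtain ⟨hi, hle, -⟩ := leaver_spec hl
  unfold desStep
  rw [hl]
  simp only
  set b := best (P i) (remObjs st) with hb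
  split_ifs with hc
  · obtain ⟨hc1, hc2, hc3⟩ := hc
    have hti : desTau P i ≠ i := fun e => by rw [e] at hc3; exact lt_irrefl _ hc3
    refine ⟨rfl, ?_, Or.inr ⟨desTau P i, mem_remAgents.2 hc1, hti, hc2, hc3, ?_, ?_⟩⟩
    · ext j
      simp only [mem_remAgents, Finset.mem_erase]
      split_ifs with h1 h2 <;> simp_all
    · simp [heldObj, hti]
    · intro j hj hji hjt
      rw [mem_remAgents] at hj
      rw [← hb]
      simp only [heldObj, hji, hjt, if_false, hj, true_and]
      split_ifs with h <;> simp [h]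
  · refine ⟨rfl, ?_, ?_⟩
    · ext j
      simp only [mem_remAgents, Finset.mem_erase]
      split_ifs with h1 h2 <;> simp_all
    have hH : ∀ j ∈ remAgents st, j ≠ i → ∀ x : Fin n,
        (if σ b ≤ σ (heldObj st j) ∧ σ (heldObj st j) < σ (heldObj st i)
          then adjLarger σ (remObjs st) (heldObj st j) else heldObj st j) = x →
        ((if j = i then none
          else if (st.held j).isSome = true ∧ σ b ≤ σ (heldObj st j) ∧
              σ (heldObj st j) < σ (heldObj st i) then
            some (adjLarger σ (remObjs st) (heldObj st j))
          else st.held j).getD 0) = x := by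
      rintro j hj hji x rfl
      rw [mem_remAgents] at hj
      simp only [hji, if_false, hj, true_and]
      split_ifs <;> simp [heldObj]
    rcases hle.eq_or_lt with he | hlt
    · left
      refine ⟨σ.injective he, fun j hj hji => hH j hj hji _ (if_neg ?_)⟩
      rintro ⟨h1, h2⟩
      exact absurd (he ▸ h1) (not_le.2 h2)
    · right
      obtain ⟨k, hk, hkb⟩ := mem_remObjs.1 (best_spec (P i) ⟨_, heldObj_mem hi⟩).1
      rw [← hb] at hkb
      obtain ⟨t, ht, hmax⟩ := Finset.exists_max_image
        ((remAgents st).filter (fun j => σ (heldObj st j) < σ (heldObj st i)))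
        (fun j => σ (heldObj st j)) ⟨k, by simp [hk, hkb, hlt]⟩
      simp only [Finset.mem_filter] at ht hmax
      have hti : t ≠ i := fun e => by rw [e] at ht; exact lt_irrefl _ ht.2
      have hbt : σ b ≤ σ (heldObj st t) := by
        have := hmax k ⟨hk, by rw [hkb]; exact hlt⟩
        rwa [hkb] at this
      refine ⟨t, ht.1, hti, hbt, ht.2, hH t ht.1 hti _ ?_, fun j hj hji hjt => hH j hj hji _ ?_⟩
      · rw [if_pos ⟨hbt, ht.2⟩]
        obtain ⟨a1, a2, a3⟩ := adjLarger_spec (heldObj_mem hi) ht.2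
        obtain ⟨m, hm, hme⟩ := mem_remObjs.1 a1
        refine σ.injective (le_antisymm (a3 _ (heldObj_mem hi) ht.2) ?_)
        by_contra! hlt'
        rw [← hme] at hlt' a2
        exact absurd (hmax m ⟨hm, hlt'⟩) (not_le.2 a2)
      · by_cases h1 : σ b ≤ σ (heldObj st j) ∧ σ (heldObj st j) < σ (heldObj st i)
        · have h2 := (hmax j ⟨hj, h1.2⟩).lt_of_ne
            (fun e => hjt (hI j hj t ht.1 (σ.injective e)))
          rw [if_pos h1, if_pos ⟨h1.1, h2⟩]
        · rw [if_neg h1, if_neg (fun h2 => h1 ⟨h2.1, h2.2.trans ht.2⟩)]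

/-- After a step, holdings are again injective and exactly the taken object has disappeared. -/
theorem StepShape.heldInj_remObjs (hI : HeldInj st) {i : Fin n} {st' : AlgState n}
    (hi : i ∈ remAgents st) (hs : StepShape σ P st i st') :
    HeldInj st' ∧ remObjs st' = (remObjs st).erase (best (P i) (remObjs st)) := by
  have hrem : ∀ j, j ∈ remAgents st' ↔ j ≠ i ∧ j ∈ remAgents st := fun j => by
    rw [hs.rem, Finset.mem_erase]
  have hbS := (best_spec (P i) ⟨_, heldObj_mem hi⟩).1
  have main : HeldInj st' ∧ ∀ j ∈ remAgents st',
      heldObj st' j ∈ (remObjs st).erase (best (P i) (remObjs st)) := by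
    rcases hs.shape with ⟨hb, hH⟩ | ⟨t, ht, hti, hbt, hlt, htH, hH⟩
    · constructor
      · intro j hj k hk he
        rw [hrem] at hj hk
        rw [hH j hj.2 hj.1, hH k hk.2 hk.1] at he
        exact hI j hj.2 k hk.2 he
      · intro j hj
        rw [hrem] at hj
        rw [hH j hj.2 hj.1, Finset.mem_erase, hb]
        exact ⟨fun e => hj.1 (hI j hj.2 i hi e), heldObj_mem hj.2⟩
    · have htS := heldObj_mem ht
      have hcases : ∀ j ∈ remAgents st', (j = t ∧ heldObj st' j = heldObj st i) ∨
          (j ≠ t ∧ σ (best (P i) (remObjs st)) ≤ σ (heldObj st j) ∧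
            σ (heldObj st j) < σ (heldObj st t) ∧
            heldObj st' j = adjLarger σ (remObjs st) (heldObj st j)) ∨
          (j ≠ t ∧ ¬ (σ (best (P i) (remObjs st)) ≤ σ (heldObj st j) ∧
            σ (heldObj st j) < σ (heldObj st t)) ∧ heldObj st' j = heldObj st j) := by
        intro j hj
        rw [hrem] at hj
        by_cases hjt : j = t
        · left; exact ⟨hjt, by rw [hjt, htH]⟩
        · right
          have := hH j hj.2 hj.1 hjt
          split_ifs at this with hc
          · left; exact ⟨hjt, hc.1, hc.2, this⟩
          · right; exact ⟨hjt, hc, this⟩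
      have hneS : ∀ j ∈ remAgents st', ∀ k ∈ remAgents st, j ≠ k →
          σ (heldObj st j) ≠ σ (heldObj st k) := fun j hj k hk hjk e =>
        hjk (hI j ((hrem j).1 hj).2 k hk (σ.injective e))
      constructor
      · intro j hj k hk he
        have hσ := congrArg σ he
        rw [hrem] at hj hk
        by_contra hjk
        have hne1 := hneS j ((hrem j).2 hj) k hk.2 hjk
        have hne2 := hneS j ((hrem j).2 hj) i hi hj.1
        have hne3 := hneS k ((hrem k).2 hk) i hi hk.1
        rcases hcases j ((hrem j).2 hj) with ⟨hj1, hj2⟩ | ⟨hj1, hj2, hj3, hj4⟩ | ⟨hj1, hj2, hj3⟩ <;>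
          rcases hcases k ((hrem k).2 hk) with
            ⟨hk1, hk2⟩ | ⟨hk1, hk2, hk3, hk4⟩ | ⟨hk1, hk2, hk3⟩
        · exact hjk (hj1.trans hk1.symm)
        · obtain ⟨-, -, a3⟩ := adjLarger_spec htS hk3
          have := a3 _ htS hk3
          rw [hj2, hk4] at hσ
          order
        · rw [hj2, hk3] at hσ; exact hne3 hσ.symm
        · obtain ⟨-, -, a3⟩ := adjLarger_spec htS hj3
          have := a3 _ htS hj3
          rw [hk2, hj4] at hσ
          order
        · obtain ⟨-, a2, a3⟩ := adjLarger_spec htS hj3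
          obtain ⟨-, b2, b3⟩ := adjLarger_spec htS hk3
          rw [hj4, hk4] at hσ
          rcases lt_or_gt_of_ne hne1 with h | h
          · have := a3 _ (heldObj_mem hk.2) h
            order
          · have := b3 _ (heldObj_mem hj.2) h
            order
        · obtain ⟨-, a2, a3⟩ := adjLarger_spec htS hj3
          have := a3 _ htS hj3
          have hne4 := hneS k ((hrem k).2 hk) t ht hk1
          rw [hj4, hk3] at hσ
          exact hk2 ⟨by order, by order⟩
        · rw [hk2, hj3] at hσ; exact hne2 hσ
        · obtain ⟨-, a2, a3⟩ := adjLarger_spec htS hk3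
          have := a3 _ htS hk3
          have hne4 := hneS j ((hrem j).2 hj) t ht hj1
          rw [hk4, hj3] at hσ
          exact hj2 ⟨by order, by order⟩
        · rw [hk3, hj3] at hσ; exact hne1 hσ
      · intro j hj
        rw [Finset.mem_erase]
        rcases hcases j hj with ⟨hj1, hj2⟩ | ⟨hj1, hj2, hj3, hj4⟩ | ⟨hj1, hj2, hj3⟩
        · rw [hj2]
          exact ⟨fun e => by rw [← e] at hbt; order, heldObj_mem hi⟩
        · obtain ⟨a1, a2, -⟩ := adjLarger_spec htS hj3
          rw [hj4]
          exact ⟨fun e => by rw [e] at a2; order, a1⟩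
        · rw [hj3]
          have hne4 := hneS j hj t ht hj1
          refine ⟨fun e => hj2 ?_, heldObj_mem ((hrem j).1 hj).2⟩
          rw [← e] at hbt ⊢
          exact ⟨le_rfl, by order⟩
  refine ⟨main.1, Finset.eq_of_subset_of_card_le ?_ ?_⟩
  · intro o ho
    obtain ⟨j, hj, rfl⟩ := mem_remObjs.1 ho
    exact main.2 j hj
  · have c1 : (remObjs st').card = (remAgents st').card :=
      Finset.card_image_of_injOn fun a ha b hb => main.1 a ha b hb
    have c2 : (remObjs st).card = (remAgents st).card :=
      Finset.card_image_of_injOn fun a ha b hb => hI a ha b hb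
    rw [Finset.card_erase_of_mem hbS, c1, c2, hs.rem, Finset.card_erase_of_mem hi]

end Step

/-! ### What a remaining agent is guaranteed -/

section Run

variable {n : ℕ} [NeZero n] {σ : Fin n ≃ Fin n} {P : Fin n → Pref n}

theorem run_res_of_not_mem (k : ℕ) {st : AlgState n} (hI : HeldInj st) {j : Fin n}
    (hj : j ∉ remAgents st) : ((desStep σ P)^[k] st).res j = st.res j := by
  induction k generalizing st with
  | zero => rfl
  | succ k ih =>
    rw [Function.iterate_succ_apply]
    cases hl : leaver σ P st with
    | none =>
      have : desStep σ P st = st := by unfold desStep; rw [hl]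
      rw [this]; exact ih hI hj
    | some i =>
      have hi := (leaver_spec hl).1
      have hs := desStep_shape hI hl
      rw [ih (hs.heldInj_remObjs hI hi).1 (by rw [hs.rem]; simp [hj]), hs.res,
        Function.update_of_ne (fun e : j = i => hj (by rw [e]; exact hi))]

theorem run_res_leaver (k : ℕ) {st : AlgState n} (hI : HeldInj st) {i : Fin n}
    (hl : leaver σ P st = some i) :
    ((desStep σ P)^[k + 1] st).res i = some (best (P i) (remObjs st)) := by
  have hi := (leaver_spec hl).1
  have hs := desStep_shape hI hl
  rw [Function.iterate_succ_apply,
    run_res_of_not_mem k (hs.heldInj_remObjs hI hi).1 (by rw [hs.rem]; simp), hs.res,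
    Function.update_self]

/-- A statement about the final assignment of agent `j` holds as soon as it holds when `j` is the
next to leave and is inherited backwards through every step in which somebody else leaves. -/
theorem run_induction {Φ : AlgState n → Prop} {Ψ : AlgState n → Fin n → Prop} {j : Fin n}
    (hleave : ∀ st, HeldInj st → leaver σ P st = some j → Φ st → Ψ st (best (P j) (remObjs st)))
    (hstep : ∀ st i, HeldInj st → leaver σ P st = some i → i ≠ j → j ∈ remAgents st → Φ st →
      StepShape σ P st i (desStep σ P st) → HeldInj (desStep σ P st) →
      remObjs (desStep σ P st) = (remObjs st).erase (best (P i) (remObjs st)) →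
      (Φ (desStep σ P st) ∧ ∀ o, Ψ (desStep σ P st) o → Ψ st o) ∨
      ∀ k, (remAgents (desStep σ P st)).card ≤ k →
        ∃ o, ((desStep σ P)^[k] (desStep σ P st)).res j = some o ∧ Ψ st o)
    (k : ℕ) {st : AlgState n} (hI : HeldInj st) (hk : (remAgents st).card ≤ k)
    (hj : j ∈ remAgents st) (hΦ : Φ st) :
    ∃ o, ((desStep σ P)^[k] st).res j = some o ∧ Ψ st o := by
  induction k generalizing st with
  | zero =>
    have := Finset.card_pos.2 ⟨j, hj⟩
    omega
  | succ k ih =>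
    obtain ⟨i, hl⟩ := exists_leaver (σ := σ) (P := P) hj
    by_cases hij : i = j
    · subst hij
      exact ⟨_, run_res_leaver k hI hl, hleave st hI hl hΦ⟩
    · have hi := (leaver_spec hl).1
      have hs := desStep_shape hI hl
      obtain ⟨hI', hS'⟩ := hs.heldInj_remObjs hI hi
      have hcard : (remAgents (desStep σ P st)).card ≤ k := by
        rw [hs.rem, Finset.card_erase_of_mem hi]
        omega
      have hj' : j ∈ remAgents (desStep σ P st) := by
        rw [hs.rem, Finset.mem_erase]
        exact ⟨Ne.symm hij, hj⟩
      rw [Function.iterate_succ_apply]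
      rcases hstep st i hI hl hij hj hΦ hs hI' hS' with ⟨h1, h2⟩ | h
      · obtain ⟨o, ho1, ho2⟩ := ih hI' hcard hj' h1
        exact ⟨o, ho1, h2 o ho2⟩
      · exact h k hcard

theorem run_res_mem (k : ℕ) {st : AlgState n} (hI : HeldInj st)
    (hk : (remAgents st).card ≤ k) {j : Fin n} (hj : j ∈ remAgents st) :
    ∃ o, ((desStep σ P)^[k] st).res j = some o ∧ o ∈ remObjs st := by
  refine run_induction (Φ := fun _ => True) (Ψ := fun st o => o ∈ remObjs st) ?_ ?_ k hI hk hj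
    trivial
  · intro st _ hl _
    exact (best_spec _ ⟨_, heldObj_mem (leaver_spec hl).1⟩).1
  · intro st i _ _ _ _ _ _ _ hS'
    left
    refine ⟨trivial, fun o ho => ?_⟩
    rw [hS'] at ho
    exact Finset.mem_of_mem_erase ho

/-- Agent `j` holds an object weakly above her best remaining object `b`, typically after a jump,
and nobody below her is going to take an object weakly above `b` before she is asked. -/
structure Pending (σ : Fin n ≃ Fin n) (P : Fin n → Pref n) (j b : Fin n) (st : AlgState n) :
    Prop where
  best_eq : best (P j) (remObjs st) = b
  le_held : σ b ≤ σ (heldObj st j)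
  weak : ∀ k ∈ remAgents st, σ (heldObj st k) < σ (heldObj st j) →
    σ (heldObj st k) ≤ σ (best (P k) (remObjs st))
  strict : ∀ k ∈ remAgents st, σ (heldObj st k) < σ (heldObj st j) → σ b ≤ σ (heldObj st k) →
    σ (heldObj st k) < σ (best (P k) (remObjs st))

/-- A pending agent receives the object she is waiting for: every agent leaving before her takes
the object she holds herself, which lies below `b`. -/
theorem run_res_pending (hP : ∀ i, singlePeaked σ (P i)) (k : ℕ) {st : AlgState n}
    (hI : HeldInj st) (hk : (remAgents st).card ≤ k) {j b : Fin n} (hj : j ∈ remAgents st)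
    (hb : Pending σ P j b st) : ((desStep σ P)^[k] st).res j = some b := by
  suffices h : ∃ o, ((desStep σ P)^[k] st).res j = some o ∧ o = b by
    obtain ⟨o, h, rfl⟩ := h
    exact h
  refine run_induction (Φ := Pending σ P j b) (Ψ := fun _ o => o = b)
    (fun st _ _ h => h.best_eq) ?_ k hI hk hj hb
  intro st i hI hl hij hj hb hs hI' hS'
  left
  refine ⟨?_, fun _ => id⟩
  obtain ⟨hi, hle, hlow⟩ := leaver_spec hl
  have hlt : σ (heldObj st i) < σ (heldObj st j) := by
    refine lt_of_le_of_ne ?_ (fun e => hij (hI i hi j hj (σ.injective e)))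
    by_contra! h
    have := hlow j hj h
    rw [hb.best_eq] at this
    exact absurd this (not_lt.2 hb.le_held)
  have htake := le_antisymm hle (hb.weak i hi hlt)
  have hib : σ (heldObj st i) < σ b := by
    by_contra! h
    exact absurd (hb.strict i hi hlt h) (not_lt.2 hle)
  rcases hs.shape with ⟨-, hH⟩ | ⟨t, -, -, h1, h2, -⟩
  swap
  · order
  have hne : best (P j) (remObjs st) ≠ best (P i) (remObjs st) := fun e => by
    rw [hb.best_eq] at e
    rw [← e] at htake
    order
  have hrem : ∀ j, j ∈ remAgents (desStep σ P st) ↔ j ≠ i ∧ j ∈ remAgents st := fun j => by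
    rw [hs.rem, Finset.mem_erase]
  have hHj := hH j hj (Ne.symm hij)
  refine ⟨?_, ?_, ?_, ?_⟩
  · rw [hS', best_erase ⟨_, heldObj_mem hj⟩ hne, hb.best_eq]
  · rw [hHj]; exact hb.le_held
  · intro k hk hkj
    rw [hrem] at hk
    rw [hHj, hH k hk.2 hk.1] at hkj
    rw [hH k hk.2 hk.1, hS']
    refine le_best_erase (hP k) (heldObj_mem hk.2) (fun e => hk.1 ?_) (hb.weak k hk.2 hkj)
    exact hI k hk.2 i hi (e.trans (σ.injective htake))
  · intro k hk hkj hbk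
    rw [hrem] at hk
    rw [hHj, hH k hk.2 hk.1] at hkj
    rw [hH k hk.2 hk.1] at hbk
    rw [hH k hk.2 hk.1, hS']
    have hk3 := hb.strict k hk.2 hkj hbk
    rwa [best_erase ⟨_, heldObj_mem hj⟩ (fun e => by rw [e] at hk3; order)]

/-- Every remaining agent finally receives an object she weakly prefers to the one she currently
holds. -/
theorem run_res_weakPref (hP : ∀ i, singlePeaked σ (P i)) (k : ℕ) {st : AlgState n}
    (hI : HeldInj st) (hk : (remAgents st).card ≤ k) {j : Fin n} (hj : j ∈ remAgents st) :
    ∃ o, ((desStep σ P)^[k] st).res j = some o ∧ weakPref (P j) o (heldObj st j) := by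
  refine run_induction (Φ := fun _ => True) (Ψ := fun st o => weakPref (P j) o (heldObj st j))
    ?_ ?_ k hI hk hj trivial
  · intro st _ hl _
    have hm := heldObj_mem (leaver_spec hl).1
    exact (best_spec _ ⟨_, hm⟩).2 _ hm
  intro st i hI hl hij hj _ hs hI' hS'
  obtain ⟨hi, hle, hlow⟩ := leaver_spec hl
  have hjS := heldObj_mem hj
  have hiS := heldObj_mem hi
  have hrem : ∀ j, j ∈ remAgents (desStep σ P st) ↔ j ≠ i ∧ j ∈ remAgents st := fun j => by
    rw [hs.rem, Finset.mem_erase]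
  rcases hs.shape with ⟨-, hH⟩ | ⟨t, ht, hti, hbt, hlt, htH, hH⟩
  · left
    exact ⟨trivial, fun o ho => by rwa [hH j hj (Ne.symm hij)] at ho⟩
  have htS := heldObj_mem ht
  by_cases hjt : j = t
  · subst hjt
    have hpass := hlow j hj hlt
    by_cases hup : σ (heldObj st i) ≤ σ (best (P j) (remObjs st))
    · left
      refine ⟨trivial, fun o ho => ?_⟩
      rw [htH] at ho
      exact le_trans ho (sp_le (hP j) hiS hjS hlt.le hup)
    · -- the inherited object overshoots the best object of `j`
      right
      rw [not_le] at hup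
      have hbest : ∀ k, σ (best (P i) (remObjs st)) < σ (best (P k) (remObjs st)) →
          best (P k) (remObjs (desStep σ P st)) = best (P k) (remObjs st) := fun k hk => by
        rw [hS', best_erase ⟨_, hjS⟩ (fun e => by rw [e] at hk; order)]
      intro k hk
      refine ⟨_, run_res_pending hP k hI' hk ((hrem j).2 ⟨Ne.symm hij, hj⟩)
        (b := best (P j) (remObjs st)) ⟨hbest j (by order), by rw [htH]; exact hup.le, ?_, ?_⟩,
        (best_spec _ ⟨_, hjS⟩).2 _ hjS⟩
      · intro l hl hlj
        rw [hrem] at hl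
        have hlt' : l ≠ j := fun e => by rw [e] at hlj; order
        have hHl := hH l hl.2 hl.1 hlt'
        rw [htH] at hlj
        split_ifs at hHl with hc
        · have hp := hlow l hl.2 (hc.2.trans hlt)
          rw [hHl, hbest l (by order)]
          exact (adjLarger_spec htS hc.2).2.2 _ (best_spec _ ⟨_, hjS⟩).1 hp
        · rw [hHl] at hlj ⊢
          rw [hS']
          refine le_best_erase (hP l) (heldObj_mem hl.2) (fun e => hc ?_) (hlow l hl.2 hlj).le
          rw [e]
          refine ⟨le_rfl, hbt.lt_of_ne (fun e' => hlt' ?_)⟩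
          exact hI l hl.2 j hj (e.trans (σ.injective e'))
      · intro l hl hlj hbl
        rw [hrem] at hl
        have hlt' : l ≠ j := fun e => by rw [e] at hlj; order
        have hHl := hH l hl.2 hl.1 hlt'
        rw [htH] at hlj
        split_ifs at hHl with hc
        · have := (adjLarger_spec htS hc.2).2.2 _ htS hc.2
          rw [hHl] at hbl
          order
        · rw [hHl] at hlj hbl ⊢
          have hp := hlow l hl.2 hlj
          rwa [hbest l (by order)]
  · left
    refine ⟨trivial, fun o ho => ?_⟩
    have hHj := hH j hj (Ne.symm hij) hjt
    split_ifs at hHj with hc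
    · obtain ⟨a1, a2, a3⟩ := adjLarger_spec htS hc.2
      rw [hHj] at ho
      refine le_trans ho (sp_le (hP j) a1 hjS a2.le ?_)
      exact a3 _ (best_spec _ ⟨_, hjS⟩).1 (hlow j hj (hc.2.trans hlt))
    · rwa [hHj] at ho

end Run

/-! ### Separating questions for the designator -/

section Separation

variable {n : ℕ} [NeZero n] {σ : Fin n ≃ Fin n}

theorem mem_remAgents_desInit {P : Fin n → Pref n} {i : Fin n} :
    i ∈ remAgents (desInit P) ↔ topObj (P i) ≠ i := by
  rw [mem_remAgents]
  simp only [desInit]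
  split_ifs with h <;> simp [h]

theorem heldObj_desInit {P : Fin n → Pref n} {i : Fin n} (hi : topObj (P i) ≠ i) :
    heldObj (desInit P) i = i := by
  simp [heldObj, desInit, hi]

theorem heldInj_desInit (P : Fin n → Pref n) : HeldInj (desInit P) := by
  intro i hi j hj h
  rw [mem_remAgents_desInit] at hi hj
  rwa [heldObj_desInit hi, heldObj_desInit hj] at h

theorem designator_null {P : Fin n → Pref n} {i : Fin n} (hi : topObj (P i) = i) :
    designator σ P i = i := by
  unfold designator
  rw [run_res_of_not_mem n (heldInj_desInit P) (by rw [mem_remAgents_desInit]; simp [hi])]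
  simp [desInit, hi]

theorem weakPref_topObj (p : Pref n) (o : Fin n) : weakPref p (topObj p) o := by
  simp [weakPref, topObj]

/-- The designator is individually rational. -/
theorem designator_weakPref {P : Fin n → Pref n} (hP : ∀ i, singlePeaked σ (P i)) (i : Fin n) :
    weakPref (P i) (designator σ P i) i := by
  by_cases hi : topObj (P i) = i
  · rw [designator_null hi]; exact le_rfl
  · obtain ⟨o, ho1, ho2⟩ := run_res_weakPref hP n (heldInj_desInit P)
      ((Finset.card_le_univ _).trans (by simp)) (mem_remAgents_desInit.2 hi)
    rw [heldObj_desInit hi] at ho2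
    unfold designator
    rw [ho1]
    exact ho2

/-- The state after `s` steps of Stage II. -/
noncomputable def stAt (σ : Fin n ≃ Fin n) (P : Fin n → Pref n) (s : ℕ) : AlgState n :=
  (desStep σ P)^[s] (desInit P)

theorem stAt_succ (P : Fin n → Pref n) (s : ℕ) :
    stAt σ P (s + 1) = desStep σ P (stAt σ P s) :=
  Function.iterate_succ_apply' _ _ _

theorem stAt_inv (P : Fin n → Pref n) (s : ℕ) :
    HeldInj (stAt σ P s) ∧ (remAgents (stAt σ P s)).card ≤ n - s := by
  induction s with
  | zero => exact ⟨heldInj_desInit P, (Finset.card_le_univ _).trans (by simp)⟩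
  | succ s ih =>
    obtain ⟨hI, hc⟩ := ih
    rw [stAt_succ]
    rcases (remAgents (stAt σ P s)).eq_empty_or_nonempty with h0 | ⟨j, hj⟩
    · have : desStep σ P (stAt σ P s) = stAt σ P s := by
        cases hl : leaver σ P (stAt σ P s) with
        | none => unfold desStep; rw [hl]
        | some i => have := (leaver_spec hl).1; rw [h0] at this; simp at this
      rw [this, h0]
      exact ⟨hI, by simp⟩
    · obtain ⟨i, hl⟩ := exists_leaver (σ := σ) (P := P) hj
      have hi := (leaver_spec hl).1
      have hs := desStep_shape hI hl
      refine ⟨(hs.heldInj_remObjs hI hi).1, ?_⟩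
      rw [hs.rem, Finset.card_erase_of_mem hi]
      omega

theorem designator_eq_run {s : ℕ} (hs : s ≤ n) (P : Fin n → Pref n) (i : Fin n) :
    designator σ P i = (((desStep σ P)^[n - s] (stAt σ P s)).res i).getD 0 := by
  unfold stAt designator
  rw [← Function.iterate_add_apply, Nat.sub_add_cancel hs]

/-- The answer of an agent with preference `p` holding `x`, when the remaining objects are `S` and
the initially active ones `A`: `some (o, t)` means that she leaves with `o` and designates `t`,
`none` that she passes. -/
noncomputable def answer (σ : Fin n ≃ Fin n) (A S : Finset (Fin n)) (x : Fin n) (p : Pref n) :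
    Option (Fin n × Fin n) :=
  if σ (best p S) ≤ σ x then some (best p S, best p A) else none

/-- Let `P` and `P'` lead to the same state, at which everybody holding less than `k` passes, and
let the answers of `k` differ. Then `k` with preference `P k` weakly prefers her assignment at `P`:
if she leaves, she takes her best remaining object; if she passes, she is guaranteed her held
object, whereas leaving at `P'` yields an object weakly below it, on the wrong side of her peak. -/
theorem weakPref_of_answer_ne {P P' : Fin n → Pref n} (hP : ∀ i, singlePeaked σ (P i))
    {s : ℕ} (hs : s < n) {st : AlgState n} (h : stAt σ P s = st) (h' : stAt σ P' s = st)
    {k : Fin n} (hk : k ∈ remAgents st)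
    (hlow : ∀ j ∈ remAgents st, σ (heldObj st j) < σ (heldObj st k) →
      σ (heldObj st j) < σ (best (P j) (remObjs st)))
    (hlow' : ∀ j ∈ remAgents st, σ (heldObj st j) < σ (heldObj st k) →
      σ (heldObj st j) < σ (best (P' j) (remObjs st)))
    {A : Finset (Fin n)}
    (hne : answer σ A (remObjs st) (heldObj st k) (P k) ≠
      answer σ A (remObjs st) (heldObj st k) (P' k)) :
    weakPref (P k) (designator σ P k) (designator σ P' k) := by
  obtain ⟨hI, hc⟩ := stAt_inv (σ := σ) P s
  rw [h] at hI hc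
  have hkS := heldObj_mem hk
  rw [designator_eq_run hs.le, designator_eq_run hs.le, h, h']
  obtain ⟨m, hm⟩ : ∃ m, n - s = m + 1 := ⟨n - s - 1, by omega⟩
  by_cases hleave : σ (best (P k) (remObjs st)) ≤ σ (heldObj st k)
  · obtain ⟨o, ho1, ho2⟩ := run_res_mem (σ := σ) (P := P') (n - s) hI hc hk
    rw [ho1, hm, run_res_leaver m hI (leaver_eq hI hk hleave hlow)]
    exact (best_spec _ ⟨_, hkS⟩).2 o ho2
  · have hleave' : σ (best (P' k) (remObjs st)) ≤ σ (heldObj st k) := by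
      by_contra hn'
      exact hne (by simp only [answer, if_neg hleave, if_neg hn'])
    obtain ⟨o, ho1, ho2⟩ := run_res_weakPref hP (n - s) hI hc hk
    rw [ho1, hm, run_res_leaver m hI (leaver_eq hI hk hleave' hlow')]
    exact le_trans ho2 (sp_le (hP k) hkS (best_spec _ ⟨_, hkS⟩).1 hleave' (not_le.1 hleave).le)

/-- The next state depends on the preferences only through the answer of the leaving agent. -/
theorem desStep_congr {P P' : Fin n → Pref n} {st : AlgState n} {i : Fin n}
    (hl : leaver σ P st = some i) (hl' : leaver σ P' st = some i)
    (hb : best (P' i) (remObjs st) = best (P i) (remObjs st)) (ht : desTau P' i = desTau P i) :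
    desStep σ P' st = desStep σ P st := by
  unfold desStep
  simp only [hl, hl', hb, ht]

/-- Let `B` have no separating question. Nullness is then constant on `B` by individual
rationality, and inductively every state of Stage II is constant on `B`: otherwise, at the first
change, the lowest agent up to the leaving one whose answer varies over `B` could be asked. -/
theorem exists_separates (B : Box n) (hB : GoodBox (spDomain σ) B)
    (hU : Undecided (designator σ) B) : ∃ i A, Separates (designator σ) B i A := by
  classical
  have hsp : ∀ P, InBox B P → ∀ i, singlePeaked σ (P i) := fun P hP i => (hB i).2 _ (hP i)
  by_cases hnull : ∃ i, (∃ p ∈ B i, topObj p = i) ∧ ∃ p ∈ B i, topObj p ≠ i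
  · obtain ⟨i, ⟨p, hp, hpi⟩, q, hq, hqi⟩ := hnull
    refine ⟨i, Finset.univ.filter (fun p => topObj p = i), ⟨p, hp, by simpa using hpi⟩,
      ⟨q, hq, by simpa using hqi⟩, fun P P' hP hP' h => ?_⟩
    simp only [Finset.mem_filter, Finset.mem_univ, true_and] at h
    by_cases hi : topObj (P i) = i
    · rw [designator_null hi]
      nth_rw 2 [← hi]
      exact weakPref_topObj _ _
    · have hi' : topObj (P' i) = i := by tauto
      rw [designator_null hi']
      exact designator_weakPref (hsp P hP) i
  by_contra hno
  obtain ⟨P0, P1, hP0, hP1, hne⟩ := hU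
  -- Stage I is the same on the whole box
  have htop : ∀ P, InBox B P → ∀ i, topObj (P i) = i ↔ topObj (P0 i) = i := by
    intro P hP i
    by_contra h
    refine hnull ⟨i, ?_⟩
    by_cases h1 : topObj (P i) = i
    · exact ⟨⟨_, hP i, h1⟩, ⟨_, hP0 i, by tauto⟩⟩
    · exact ⟨⟨_, hP0 i, by tauto⟩, ⟨_, hP i, h1⟩⟩
  have hact : ∀ P, InBox B P → activeAgents P = activeAgents P0 := fun P hP => by
    ext i
    simp [activeAgents, htop P hP i]
  -- hence, without a separating question, so is every state of Stage II
  have key : ∀ s ≤ n, ∀ P, InBox B P → stAt σ P s = stAt σ P0 s := by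
    intro s
    induction s with
    | zero =>
      intro _ P hP
      simp only [stAt, Function.iterate_zero, id, desInit, htop P hP]
    | succ s ih =>
      intro hsn P hP
      have ih := ih (by omega)
      obtain ⟨st, hst⟩ : ∃ st, stAt σ P0 s = st := ⟨_, rfl⟩
      rw [stAt_succ, stAt_succ, ih P hP, hst]
      rw [hst] at ih
      have hI : HeldInj st := hst ▸ (stAt_inv P0 s).1
      rcases (remAgents st).eq_empty_or_nonempty with h0 | ⟨j, hj⟩
      · have : ∀ P, desStep σ P st = st := fun P => by
          cases hl : leaver σ P st with
          | none => unfold desStep; rw [hl]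
          | some i => have := (leaver_spec hl).1; rw [h0] at this; simp at this
        rw [this, this]
      obtain ⟨i, hl⟩ := exists_leaver (σ := σ) (P := P0) hj
      obtain ⟨hi, hle, hlow⟩ := leaver_spec hl
      let q : Fin n → Pref n → Option (Fin n × Fin n) := fun k =>
        answer σ (activeAgents P0) (remObjs st) (heldObj st k)
      have hconst : ∀ k ∈ remAgents st, σ (heldObj st k) ≤ σ (heldObj st i) →
          ∀ p ∈ B k, q k p = q k (P0 k) := by
        by_contra! hbad
        obtain ⟨k0, hk0, hk0i, p0, hp0, hq0⟩ := hbad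
        obtain ⟨k, hk, hmin⟩ := Finset.exists_min_image
          ((remAgents st).filter (fun k => ∃ p ∈ B k, q k p ≠ q k (P0 k)))
          (fun k => σ (heldObj st k)) ⟨k0, by simpa [hk0] using ⟨p0, hp0, hq0⟩⟩
        have hki : σ (heldObj st k) ≤ σ (heldObj st i) :=
          (hmin k0 (by simpa [hk0] using ⟨p0, hp0, hq0⟩)).trans hk0i
        obtain ⟨hk, p, hp, hq⟩ := Finset.mem_filter.1 hk
        -- everybody holding less than `k` passes on the whole box, as they do at `P0`
        have hpass : ∀ P, InBox B P → ∀ j ∈ remAgents st, σ (heldObj st j) < σ (heldObj st k) →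
            σ (heldObj st j) < σ (best (P j) (remObjs st)) := by
          intro P hP j hj hjk
          have hj0 := hlow j hj (hjk.trans_le hki)
          have hqj : q j (P j) = q j (P0 j) := by
            by_contra hqj
            exact absurd (hmin j (by simpa [hj] using ⟨P j, hP j, hqj⟩)) (not_le.2 hjk)
          simp only [q, answer, if_neg (not_le.2 hj0)] at hqj
          by_contra hn
          rw [if_pos (not_lt.1 hn)] at hqj
          cases hqj
        refine hno ⟨k, Finset.univ.filter (fun p => q k p = q k (P0 k)),
          ⟨P0 k, hP0 k, by simp⟩, ⟨p, hp, by simpa using hq⟩, fun P P' hP hP' h => ?_⟩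
        simp only [Finset.mem_filter, Finset.mem_univ, true_and] at h
        refine weakPref_of_answer_ne (hsp P hP) (by omega) (ih P hP) (ih P' hP') hk
          (hpass P hP) (hpass P' hP') (A := activeAgents P0) (fun e => ?_)
        have e : q k (P k) = q k (P' k) := e
        rw [e] at h
        tauto
      have hpass : ∀ j ∈ remAgents st, σ (heldObj st j) < σ (heldObj st i) →
          σ (heldObj st j) < σ (best (P j) (remObjs st)) := by
        intro j hj hji
        have hqj := hconst j hj hji.le (P j) (hP j)
        simp only [q, answer, if_neg (not_le.2 (hlow j hj hji))] at hqj
        by_contra hn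
        rw [if_pos (not_lt.1 hn)] at hqj
        cases hqj
      have hqi := hconst i hi le_rfl (P i) (hP i)
      simp only [q, answer, if_pos hle] at hqi
      split_ifs at hqi with hle'
      simp only [Option.some.injEq, Prod.mk.injEq] at hqi
      refine desStep_congr hl (leaver_eq hI hi hle' hpass) hqi.1 ?_
      unfold desTau
      rw [hact P hP]
      exact hqi.2
  refine hne (funext fun i => ?_)
  rw [designator_eq_run le_rfl, designator_eq_run le_rfl, key n le_rfl P1 hP1]
  simp

end Separation

theorem designator_OSP (n : ℕ) [NeZero n] (hn : 3 ≤ n) (σ : Fin n ≃ Fin n) :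
    OSP (spDomain σ) (designator σ) := by
  refine osp_of_separates ⟨σ, ?_⟩ exists_separates
  -- with `σ` itself as preference the peak is the smallest object
  rintro o o' (⟨-, h⟩ | ⟨-, h⟩)
  · simp [topObj] at h
  · exact h
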